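/- For every ε > 0 there exists K > 0 such that for all k ∈ ℂ with |k| ≥ K and all x ∈ [0,ℓ] one has |s(x,k) − sin(kx)/k + (cos(kx)/k²)·(1/2)∫₀ˣ q(t) dt − (sin(kx)/k³)·[ (1/4)(q(x) + q(0)) − (1/8)(∫₀ˣ q(t) dt)² ]| ≤ ε · e^{|Im k| x} / |k|³. -/

import Mathlib

open MeasureTheory intervalIntegral Real

lemma gl_norm_sin_le (z : ℂ) : ‖Complex.sin z‖ ≤ Real.exp |z.im| := by
  rw [Complex.sin, norm_div, norm_mul, Complex.norm_I, mul_one]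
  have h1 : ‖Complex.exp (-z * Complex.I)‖ ≤ Real.exp |z.im| := by
    rw [Complex.norm_exp]; apply Real.exp_le_exp.2; simpa using le_abs_self _
  have h2 : ‖Complex.exp (z * Complex.I)‖ ≤ Real.exp |z.im| := by
    rw [Complex.norm_exp]; apply Real.exp_le_exp.2; simpa using neg_le_abs _
  have := norm_sub_le (Complex.exp (-z * Complex.I)) (Complex.exp (z * Complex.I))
  rw [show ‖(2:ℂ)‖ = 2 by simp]; linarith

lemma gl_norm_cos_le (z : ℂ) : ‖Complex.cos z‖ ≤ Real.exp |z.im| := by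
  rw [Complex.cos, norm_div]
  have h1 : ‖Complex.exp (-z * Complex.I)‖ ≤ Real.exp |z.im| := by
    rw [Complex.norm_exp]; apply Real.exp_le_exp.2; simpa using le_abs_self _
  have h2 : ‖Complex.exp (z * Complex.I)‖ ≤ Real.exp |z.im| := by
    rw [Complex.norm_exp]; apply Real.exp_le_exp.2; simpa using neg_le_abs _
  have := norm_add_le (Complex.exp (z * Complex.I)) (Complex.exp (-z * Complex.I))
  rw [show ‖(2:ℂ)‖ = 2 by simp]; linarith

lemma gl_im (k : ℂ) (r x : ℝ) (h : |r| ≤ x) : |(k * (r : ℂ)).im| ≤ |k.im| * x := by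
  simp only [Complex.mul_im, Complex.ofReal_re, Complex.ofReal_im, mul_zero, zero_add, abs_mul]
  gcongr

lemma gl_sin_le (k : ℂ) (r x : ℝ) (h : |r| ≤ x) :
    ‖Complex.sin (k * (r : ℂ))‖ ≤ Real.exp (|k.im| * x) :=
  (gl_norm_sin_le _).trans (Real.exp_le_exp.2 (gl_im k r x h))

lemma gl_cos_le (k : ℂ) (r x : ℝ) (h : |r| ≤ x) :
    ‖Complex.cos (k * (r : ℂ))‖ ≤ Real.exp (|k.im| * x) :=
  (gl_norm_cos_le _).trans (Real.exp_le_exp.2 (gl_im k r x h))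

/-- the Volterra operator bound -/
lemma gl_T_bound (ℓ M B : ℝ) (p f : ℝ → ℂ) (k : ℂ) (hM : 0 ≤ M) (hB : 0 ≤ B)
    (hp : ∀ t ∈ Set.Icc 0 ℓ, ‖p t‖ ≤ M)
    (hf : ∀ t ∈ Set.Icc 0 ℓ, ‖f t‖ ≤ B * Real.exp (|k.im| * t)) :
    ∀ x ∈ Set.Icc 0 ℓ,
      ‖∫ t in (0:ℝ)..x, (Complex.sin (k * ((x : ℂ) - t)) / k) * p t * f t‖
        ≤ (M * ℓ / ‖k‖ * B) * Real.exp (|k.im| * x) := by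
  intro x hx
  have key : ∀ t ∈ Set.uIoc 0 x, ‖(Complex.sin (k * ((x : ℂ) - t)) / k) * p t * f t‖ ≤
      M / ‖k‖ * B * Real.exp (|k.im| * x) := by
    intro t ht
    rw [Set.uIoc_of_le hx.1] at ht
    have htI : t ∈ Set.Icc 0 ℓ := ⟨ht.1.le, ht.2.trans hx.2⟩
    rw [norm_mul, norm_mul, norm_div]
    have h1 : ‖Complex.sin (k * ((x : ℂ) - t))‖ ≤ Real.exp (|k.im| * (x - t)) := by
      have := gl_sin_le k (x - t) (x - t) (by rw [abs_of_nonneg (by linarith [ht.2])])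
      simpa using this
    have h2 := hp t htI
    have h3 := hf t htI
    calc _ ≤ Real.exp (|k.im| * (x - t)) / ‖k‖ * M * (B * Real.exp (|k.im| * t)) := by gcongr
      _ = M / ‖k‖ * B * (Real.exp (|k.im| * (x - t)) * Real.exp (|k.im| * t)) := by ring
      _ = _ := by rw [← Real.exp_add]; ring_nf
  have := intervalIntegral.norm_integral_le_of_norm_le_const key
  refine this.trans ?_
  rw [sub_zero, abs_of_nonneg hx.1]
  calc _ ≤ M / ‖k‖ * B * Real.exp (|k.im| * x) * ℓ := by gcongr; exact hx.2
    _ = _ := by ring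

lemma gl_hasDerivAt_cos (k : ℂ) (hk : k ≠ 0) (x t : ℝ) :
    HasDerivAt (fun t : ℝ => Complex.cos (k * ((x - 2 * t : ℝ) : ℂ)) / (2 * k))
      (Complex.sin (k * ((x - 2 * t : ℝ) : ℂ))) t := by
  have h1 : HasDerivAt (fun t : ℝ => x - 2 * t) (-2) t := by
    simpa using ((hasDerivAt_id t).const_mul 2).const_sub x
  have h2 := ((Complex.hasDerivAt_cos _).comp t ((h1.ofReal_comp).const_mul k)).div_const (2 * k)
  refine h2.congr_deriv ?_
  push_cast; field_simp

lemma gl_hasDerivAt_sin (k : ℂ) (hk : k ≠ 0) (x t : ℝ) :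
    HasDerivAt (fun t : ℝ => - (Complex.sin (k * ((x - 2 * t : ℝ) : ℂ)) / (2 * k)))
      (Complex.cos (k * ((x - 2 * t : ℝ) : ℂ))) t := by
  have h1 : HasDerivAt (fun t : ℝ => x - 2 * t) (-2) t := by
    simpa using ((hasDerivAt_id t).const_mul 2).const_sub x
  have h2 := (((Complex.hasDerivAt_sin _).comp t ((h1.ofReal_comp).const_mul k)).div_const (2 * k)).neg
  refine h2.congr_deriv ?_
  push_cast; field_simp

/-- uniform Riemann-Lebesgue -/
lemma gl_RL (ℓ : ℝ) (hℓ : 0 < ℓ) (g : ℝ → ℂ) (hg : IntervalIntegrable g volume 0 ℓ) :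
    ∀ ε > 0, ∃ K > 0, ∀ k : ℂ, K ≤ ‖k‖ → ∀ x ∈ Set.Icc (0 : ℝ) ℓ,
      ‖∫ t in (0:ℝ)..x, Complex.sin (k * ((x - 2 * t : ℝ) : ℂ)) * g t‖
        ≤ ε * Real.exp (|k.im| * x) := by
  intro ε hε
  have hg1 : IntegrableOn g (Set.Ioc 0 ℓ) volume :=
    (intervalIntegrable_iff_integrableOn_Ioc_of_le hℓ.le).1 hg
  obtain ⟨h, -, hh, hd⟩ := MemLp.exist_eLpNorm_sub_le (p := 1) (by simp) le_rfl
    (memLp_one_iff_integrable.2 hg1) (half_pos hε)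
  have hhc : Continuous h := hh.continuous
  have hh1 : ∀ t, HasDerivAt h (deriv h t) t := fun t =>
    (hh.differentiable (by simp) t).hasDerivAt
  have hdc : Continuous (deriv h) := hh.continuous_deriv (by simp)
  have hhi : IntegrableOn h (Set.Ioc 0 ℓ) volume :=
    (intervalIntegrable_iff_integrableOn_Ioc_of_le hℓ.le).1 (hhc.intervalIntegrable _ _)
  have hdi : IntegrableOn (fun t => g t - h t) (Set.Ioc 0 ℓ) volume := hg1.sub hhi
  have hd' : ∫ t in Set.Ioc 0 ℓ, ‖g t - h t‖ ≤ ε / 2 := by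
    rw [integral_norm_eq_lintegral_enorm hdi.aestronglyMeasurable]
    rw [eLpNorm_one_eq_lintegral_enorm] at hd
    exact ENNReal.toReal_le_of_le_ofReal (by positivity) hd
  obtain ⟨A, hA⟩ := (isCompact_Icc (a := (0:ℝ)) (b := ℓ)).exists_bound_of_continuousOn
    hhc.continuousOn
  obtain ⟨B, hB⟩ := (isCompact_Icc (a := (0:ℝ)) (b := ℓ)).exists_bound_of_continuousOn
    hdc.continuousOn
  have hA0 : 0 ≤ A := (norm_nonneg _).trans (hA 0 ⟨le_rfl, hℓ.le⟩)
  have hB0 : 0 ≤ B := (norm_nonneg _).trans (hB 0 ⟨le_rfl, hℓ.le⟩)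
  refine ⟨(2 * A + B * ℓ + 1) / ε, by positivity, fun k hk x hx => ?_⟩
  have hk0 : 0 < ‖k‖ := lt_of_lt_of_le (by positivity) hk
  have hkne : k ≠ 0 := norm_pos_iff.1 hk0
  set E := Real.exp (|k.im| * x) with hE
  have hE0 : 0 < E := Real.exp_pos _
  have habs : ∀ t ∈ Set.Icc 0 x, |x - 2 * t| ≤ x := fun t ht =>
    abs_le.2 ⟨by linarith [ht.2], by linarith [ht.1]⟩
  have hsc : Continuous (fun t : ℝ => Complex.sin (k * ((x - 2 * t : ℝ) : ℂ))) := by fun_prop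
  have hgx : IntervalIntegrable g volume 0 x := hg.mono_set (by
    rw [Set.uIcc_of_le hx.1, Set.uIcc_of_le hℓ.le]; exact Set.Icc_subset_Icc_right hx.2)
  have hhx : IntervalIntegrable h volume 0 x := hhc.intervalIntegrable _ _
  have hsplit : ∫ t in (0:ℝ)..x, Complex.sin (k * ((x - 2 * t : ℝ) : ℂ)) * g t =
      (∫ t in (0:ℝ)..x, Complex.sin (k * ((x - 2 * t : ℝ) : ℂ)) * (g t - h t)) +
      ∫ t in (0:ℝ)..x, Complex.sin (k * ((x - 2 * t : ℝ) : ℂ)) * h t := by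
    rw [← intervalIntegral.integral_add]
    · congr 1; ext t; ring
    · exact (hgx.sub hhx).continuousOn_mul hsc.continuousOn
    · exact hhx.continuousOn_mul hsc.continuousOn
  have b1 : ‖∫ t in (0:ℝ)..x, Complex.sin (k * ((x - 2 * t : ℝ) : ℂ)) * (g t - h t)‖ ≤
      E * (ε / 2) := by
    calc _ ≤ ∫ t in (0:ℝ)..x, E * ‖g t - h t‖ := by
          refine intervalIntegral.norm_integral_le_of_norm_le hx.1 ?_ ?_
          · refine Filter.Eventually.of_forall fun t ht => ?_
            rw [norm_mul]
            gcongr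
            exact gl_sin_le k _ _ (habs t ⟨ht.1.le, ht.2⟩)
          · exact ((hgx.sub hhx).norm).const_mul E
      _ = E * ∫ t in (0:ℝ)..x, ‖g t - h t‖ := by rw [intervalIntegral.integral_const_mul]
      _ ≤ E * (ε / 2) := by
          gcongr
          refine le_trans ?_ hd'
          rw [intervalIntegral.integral_of_le hx.1]
          exact setIntegral_mono_set hdi.norm
            (Filter.Eventually.of_forall fun t => norm_nonneg _)
            (Set.Ioc_subset_Ioc_right hx.2).eventuallyLE
  have b2 : ‖∫ t in (0:ℝ)..x, Complex.sin (k * ((x - 2 * t : ℝ) : ℂ)) * h t‖ ≤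
      E * (ε / 2) := by
    have hcc : Continuous (fun t : ℝ => Complex.cos (k * ((x - 2 * t : ℝ) : ℂ)) / (2 * k)) := by
      fun_prop
    have ibp := intervalIntegral.integral_deriv_mul_eq_sub (a := 0) (b := x)
      (fun t _ => gl_hasDerivAt_cos k hkne x t)
      (fun t _ => hh1 t) (hsc.intervalIntegrable _ _) (hdc.intervalIntegrable _ _)
    rw [intervalIntegral.integral_add (by apply Continuous.intervalIntegrable; fun_prop)
      (by apply Continuous.intervalIntegrable; fun_prop)] at ibp
    have hcb : ∀ t ∈ Set.Icc 0 x,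
        ‖Complex.cos (k * ((x - 2 * t : ℝ) : ℂ)) / (2 * k)‖ ≤ E / (2 * ‖k‖) := fun t ht => by
      rw [norm_div, norm_mul]
      simp only [Complex.norm_ofNat]
      gcongr
      exact gl_cos_le k _ _ (habs t ht)
    have c1 : ‖∫ t in (0:ℝ)..x, Complex.cos (k * ((x - 2 * t : ℝ) : ℂ)) / (2 * k) * deriv h t‖
        ≤ E / (2 * ‖k‖) * B * ℓ := by
      have : ∀ t ∈ Set.uIoc 0 x,
          ‖Complex.cos (k * ((x - 2 * t : ℝ) : ℂ)) / (2 * k) * deriv h t‖ ≤ E / (2 * ‖k‖) * B := by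
        intro t ht
        rw [Set.uIoc_of_le hx.1] at ht
        rw [norm_mul]
        gcongr
        · exact hcb t ⟨ht.1.le, ht.2⟩
        · exact hB t ⟨ht.1.le, ht.2.trans hx.2⟩
      refine (intervalIntegral.norm_integral_le_of_norm_le_const this).trans ?_
      rw [sub_zero, abs_of_nonneg hx.1]
      gcongr
      exact hx.2
    have c2 : ‖Complex.cos (k * ((x - 2 * x : ℝ) : ℂ)) / (2 * k) * h x‖ ≤ E / (2 * ‖k‖) * A := by
      rw [norm_mul]; gcongr
      · exact hcb x ⟨hx.1, le_rfl⟩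
      · exact hA x hx
    have c3 : ‖Complex.cos (k * ((x - 2 * 0 : ℝ) : ℂ)) / (2 * k) * h 0‖ ≤ E / (2 * ‖k‖) * A := by
      rw [norm_mul]; gcongr
      · exact hcb 0 ⟨le_rfl, hx.1⟩
      · exact hA 0 ⟨le_rfl, hℓ.le⟩
    have e := eq_sub_of_add_eq ibp
    rw [e]
    refine (norm_sub_le _ _).trans ?_
    refine (add_le_add ((norm_sub_le _ _).trans (add_le_add c2 c3)) c1).trans ?_
    rw [div_le_iff₀ hε] at hk
    have : E / (2 * ‖k‖) * A + E / (2 * ‖k‖) * A + E / (2 * ‖k‖) * B * ℓ =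
      E * ((2 * A + B * ℓ) / (2 * ‖k‖)) := by ring
    rw [this]
    apply mul_le_mul_of_nonneg_left _ hE0.le
    rw [div_le_iff₀ (by positivity)]
    nlinarith
  rw [hsplit]
  refine (norm_add_le _ _).trans ?_
  linarith

/-- integration by parts, real, absolutely continuous -/
lemma gl_ibp_real (x : ℝ) (hx : 0 ≤ x) (q q' F F' : ℝ → ℝ)
    (hq' : IntervalIntegrable q' volume 0 x)
    (hq : ∀ t ∈ Set.Icc 0 x, q t = q 0 + ∫ u in (0:ℝ)..t, q' u)
    (hF : ∀ t, HasDerivAt F (F' t) t) (hF' : Continuous F') :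
    ∫ t in (0:ℝ)..x, F' t * q t = F x * q x - F 0 * q 0 - ∫ t in (0:ℝ)..x, F t * q' t := by
  have acq : AbsolutelyContinuousOnInterval (fun t => q 0 + ∫ u in (0:ℝ)..t, q' u) 0 x := by
    have h1 := hq'.absolutelyContinuousOnInterval_intervalIntegral (c := 0) (by simp)
    have h2 : AbsolutelyContinuousOnInterval (fun _ : ℝ => q 0) 0 x := by
      exact (LipschitzWith.const (q 0)).lipschitzOnWith.absolutelyContinuousOnInterval
    exact h2.add h1
  have acF : AbsolutelyContinuousOnInterval F 0 x := by
    apply ContDiffOn.absolutelyContinuousOnInterval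
    apply ContDiff.contDiffOn
    rw [contDiff_one_iff_deriv]
    refine ⟨fun t => (hF t).differentiableAt, ?_⟩
    rwa [show deriv F = F' from funext fun t => (hF t).deriv]
  have := acF.integral_mul_deriv_eq_deriv_mul acq
  have hx1 : x ∈ Set.Icc 0 x := ⟨hx, le_rfl⟩
  have e1 : ∫ t in (0:ℝ)..x, F t * deriv (fun t => q 0 + ∫ u in (0:ℝ)..t, q' u) t =
      ∫ t in (0:ℝ)..x, F t * q' t := by
    apply intervalIntegral.integral_congr_ae
    filter_upwards [hq'.ae_hasDerivAt_integral] with t ht ht2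
    have := (ht (Set.uIoc_subset_uIcc ht2) 0 (by simp)).const_add (q 0)
    rw [this.deriv]
  have e2 : ∫ t in (0:ℝ)..x, deriv F t * (q 0 + ∫ u in (0:ℝ)..t, q' u) =
      ∫ t in (0:ℝ)..x, F' t * q t := by
    apply intervalIntegral.integral_congr
    intro t ht
    rw [Set.uIcc_of_le hx] at ht
    simp only [(hF t).deriv, hq t ht]
  rw [e1, e2, ← hq x hx1] at this
  simp only [intervalIntegral.integral_same, add_zero] at this
  linarith

lemma gl_ofReal {a b : ℝ} {f : ℝ → ℝ} (hf : IntervalIntegrable f volume a b) :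
    IntervalIntegrable (fun t => (f t : ℂ)) volume a b :=
  ⟨hf.1.ofReal, hf.2.ofReal⟩

lemma gl_integral_split (x : ℝ) (F : ℝ → ℂ) (q : ℝ → ℝ) (hF : Continuous F)
    (hq : IntervalIntegrable q volume 0 x) :
    ∫ t in (0:ℝ)..x, F t * (q t : ℂ) =
      ((∫ t in (0:ℝ)..x, (F t).re * q t : ℝ) : ℂ) +
        ((∫ t in (0:ℝ)..x, (F t).im * q t : ℝ) : ℂ) * Complex.I := by
  have hr : Continuous fun t => (F t).re := by fun_prop
  have hi : Continuous fun t => (F t).im := by fun_prop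
  rw [← intervalIntegral.integral_ofReal, ← intervalIntegral.integral_ofReal,
    ← intervalIntegral.integral_mul_const, ← intervalIntegral.integral_add]
  · congr 1; ext t
    conv_lhs => rw [← Complex.re_add_im (F t)]
    push_cast; ring
  · exact gl_ofReal (hq.continuousOn_mul hr.continuousOn)
  · exact (gl_ofReal (hq.continuousOn_mul hi.continuousOn)).mul_const _

lemma gl_ibp (x : ℝ) (hx : 0 ≤ x) (q q' : ℝ → ℝ) (F F' : ℝ → ℂ)
    (hqc : Continuous q)
    (hq' : IntervalIntegrable q' volume 0 x)
    (hq : ∀ t ∈ Set.Icc 0 x, q t = q 0 + ∫ u in (0:ℝ)..t, q' u)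
    (hF : ∀ t, HasDerivAt F (F' t) t) (hF' : Continuous F') :
    ∫ t in (0:ℝ)..x, F' t * (q t : ℂ) =
      F x * q x - F 0 * q 0 - ∫ t in (0:ℝ)..x, F t * (q' t : ℂ) := by
  have hFc : Continuous F := continuous_iff_continuousAt.2 fun t => (hF t).continuousAt
  have hr : ∀ t, HasDerivAt (fun t => (F t).re) (F' t).re t := fun t =>
    (Complex.reCLM.hasFDerivAt.comp_hasDerivAt t (hF t))
  have hi : ∀ t, HasDerivAt (fun t => (F t).im) (F' t).im t := fun t =>
    (Complex.imCLM.hasFDerivAt.comp_hasDerivAt t (hF t))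
  rw [gl_integral_split x F' q hF' (hqc.intervalIntegrable _ _), gl_integral_split x F q' hFc hq',
    gl_ibp_real x hx q q' _ _ hq' hq hr (by fun_prop),
    gl_ibp_real x hx q q' _ _ hq' hq hi (by fun_prop)]
  conv_rhs => rw [← Complex.re_add_im (F x), ← Complex.re_add_im (F 0)]
  push_cast; ring

/-- first iterate -/
lemma gl_T1 (x : ℝ) (hx : 0 ≤ x) (q q' : ℝ → ℝ) (hqc : Continuous q)
    (hq' : IntervalIntegrable q' volume 0 x)
    (hq : ∀ t ∈ Set.Icc 0 x, q t = q 0 + ∫ u in (0:ℝ)..t, q' u) (k : ℂ) (hk : k ≠ 0) :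
    ∫ t in (0:ℝ)..x, (Complex.sin (k * ((x : ℂ) - t)) / k) * (q t : ℂ) * (Complex.sin (k * t) / k) =
      -(Complex.cos (k * x) / k ^ 2 * ((1 / 2 : ℂ) * ∫ t in (0:ℝ)..x, (q t : ℂ))) +
      Complex.sin (k * x) / k ^ 3 * ((1 / 4 : ℂ) * ((q x : ℂ) + q 0)) +
      1 / (4 * k ^ 3) * ∫ t in (0:ℝ)..x, Complex.sin (k * ((x - 2 * t : ℝ) : ℂ)) * (q' t : ℂ) := by
  have h := gl_ibp x hx q q' _ _ hqc hq' hq (gl_hasDerivAt_sin k hk x) (by fun_prop)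
  have e1 : ∫ t in (0:ℝ)..x,
      (Complex.sin (k * ((x : ℂ) - t)) / k) * (q t : ℂ) * (Complex.sin (k * t) / k) =
      ∫ t in (0:ℝ)..x, (1 / (2 * k ^ 2) * (Complex.cos (k * ((x - 2 * t : ℝ) : ℂ)) * (q t : ℂ)) -
        Complex.cos (k * x) / (2 * k ^ 2) * (q t : ℂ)) := by
    congr 1; ext t
    have a1 : k * ((x - 2 * t : ℝ) : ℂ) = k * ((x : ℂ) - t) - k * t := by push_cast; ring
    have a2 : k * (x : ℂ) = k * ((x : ℂ) - t) + k * t := by ring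
    rw [a1, a2, Complex.cos_sub, Complex.cos_add]
    field_simp; ring
  rw [e1, intervalIntegral.integral_sub (by apply Continuous.intervalIntegrable; fun_prop)
    (by apply Continuous.intervalIntegrable; fun_prop),
    intervalIntegral.integral_const_mul, intervalIntegral.integral_const_mul, h]
  have e2 : ∫ t in (0:ℝ)..x, -(Complex.sin (k * ((x - 2 * t : ℝ) : ℂ)) / (2 * k)) * (q' t : ℂ) =
      -(1 / (2 * k)) * ∫ t in (0:ℝ)..x, Complex.sin (k * ((x - 2 * t : ℝ) : ℂ)) * (q' t : ℂ) := by
    rw [← intervalIntegral.integral_const_mul]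
    congr 1; ext t; ring
  rw [e2]
  have a3 : k * ((x - 2 * x : ℝ) : ℂ) = -(k * x) := by push_cast; ring
  have a4 : k * ((x - 2 * 0 : ℝ) : ℂ) = (k * x) := by push_cast; ring
  rw [a3, a4, Complex.sin_neg]
  field_simp; ring

lemma gl_Q (p : ℝ → ℂ) (hp : Continuous p) (t : ℝ) :
    HasDerivAt (fun t => ∫ u in (0:ℝ)..t, p u) (p t) t :=
  intervalIntegral.integral_hasDerivAt_right (hp.intervalIntegrable _ _)
    (hp.stronglyMeasurableAtFilter _ _) hp.continuousAt

lemma gl_Qc (p : ℝ → ℂ) (hp : Continuous p) : Continuous (fun t => ∫ u in (0:ℝ)..t, p u) :=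
  continuous_iff_continuousAt.2 fun t => (gl_Q p hp t).continuousAt

lemma gl_T2 (x : ℝ) (p : ℝ → ℂ) (hp : Continuous p) (k : ℂ) (hk : k ≠ 0) :
    ∫ t in (0:ℝ)..x, (Complex.sin (k * ((x : ℂ) - t)) / k) * p t *
        (-(Complex.cos (k * t) / k ^ 2 * ((1 / 2 : ℂ) * ∫ u in (0:ℝ)..t, p u))) =
      -(Complex.sin (k * x) / k ^ 3 * ((1 / 8 : ℂ) * (∫ t in (0:ℝ)..x, p t) ^ 2)) -
      1 / (4 * k ^ 3) * ∫ t in (0:ℝ)..x, Complex.sin (k * ((x - 2 * t : ℝ) : ℂ)) *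
        (p t * ∫ u in (0:ℝ)..t, p u) := by
  have hQ := gl_Q p hp
  have hQc := gl_Qc p hp
  set Q : ℝ → ℂ := fun t => ∫ u in (0:ℝ)..t, p u with hQd
  have hQ0 : Q 0 = 0 := by simp [hQd]
  have hsq : ∫ t in (0:ℝ)..x, p t * Q t = 1 / 2 * Q x ^ 2 := by
    have := intervalIntegral.integral_deriv_mul_eq_sub (a := 0) (b := x) (fun t _ => hQ t)
      (fun t _ => hQ t) (hp.intervalIntegrable _ _) (hp.intervalIntegrable _ _)
    rw [hQ0] at this
    have e : ∫ t in (0:ℝ)..x, (p t * Q t + Q t * p t) = 2 * ∫ t in (0:ℝ)..x, p t * Q t := by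
      rw [← intervalIntegral.integral_const_mul]; congr 1; ext t; ring
    rw [e] at this
    linear_combination this / 2
  change ∫ t in (0:ℝ)..x, (Complex.sin (k * ((x : ℂ) - t)) / k) * p t *
        (-(Complex.cos (k * t) / k ^ 2 * ((1 / 2 : ℂ) * Q t))) =
      -(Complex.sin (k * x) / k ^ 3 * ((1 / 8 : ℂ) * (Q x) ^ 2)) -
      1 / (4 * k ^ 3) * ∫ t in (0:ℝ)..x, Complex.sin (k * ((x - 2 * t : ℝ) : ℂ)) *
        (p t * Q t)
  have e1 : ∫ t in (0:ℝ)..x, (Complex.sin (k * ((x : ℂ) - t)) / k) * p t *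
        (-(Complex.cos (k * t) / k ^ 2 * ((1 / 2 : ℂ) * Q t))) =
      ∫ t in (0:ℝ)..x, (-(Complex.sin (k * x) / (4 * k ^ 3)) * (p t * Q t) -
        1 / (4 * k ^ 3) * (Complex.sin (k * ((x - 2 * t : ℝ) : ℂ)) * (p t * Q t))) := by
    congr 1; ext t
    have a1 : k * ((x - 2 * t : ℝ) : ℂ) = k * ((x : ℂ) - t) - k * t := by push_cast; ring
    have a2 : k * (x : ℂ) = k * ((x : ℂ) - t) + k * t := by ring
    rw [a1, a2, Complex.sin_sub, Complex.sin_add]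
    field_simp; ring
  rw [e1, intervalIntegral.integral_sub (by apply Continuous.intervalIntegrable; fun_prop)
    (by apply Continuous.intervalIntegrable; fun_prop),
    intervalIntegral.integral_const_mul, intervalIntegral.integral_const_mul, hsq]
  field_simp; ring

/-- a priori bound -/
lemma gl_apriori (ℓ M : ℝ) (hℓ : 0 < ℓ) (p u : ℝ → ℂ) (k : ℂ) (hk : k ≠ 0) (hM : 0 ≤ M)
    (hkM : 2 * (M * ℓ) ≤ ‖k‖) (hu : Continuous u)
    (hp : ∀ t ∈ Set.Icc 0 ℓ, ‖p t‖ ≤ M)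
    (hs : ∀ x ∈ Set.Icc (0 : ℝ) ℓ, u x = Complex.sin (k * x) / k +
        ∫ t in (0 : ℝ)..x, (Complex.sin (k * ((x : ℂ) - t)) / k) * p t * u t) :
    ∀ x ∈ Set.Icc 0 ℓ, ‖u x‖ ≤ 2 / ‖k‖ * Real.exp (|k.im| * x) := by
  have hk0 : 0 < ‖k‖ := norm_pos_iff.2 hk
  obtain ⟨y, hy, hmax⟩ := (isCompact_Icc (a := (0:ℝ)) (b := ℓ)).exists_isMaxOn
    ⟨0, le_rfl, hℓ.le⟩ (f := fun x => ‖u x‖ / Real.exp (|k.im| * x))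
    (Continuous.continuousOn (by
      refine Continuous.div (by fun_prop) (by fun_prop) fun x => (Real.exp_pos _).ne'))
  set S := ‖u y‖ / Real.exp (|k.im| * y) with hS
  have hS0 : 0 ≤ S := by positivity
  have hb : ∀ t ∈ Set.Icc 0 ℓ, ‖u t‖ ≤ S * Real.exp (|k.im| * t) := fun t ht => by
    rw [← div_le_iff₀ (Real.exp_pos _)]; exact hmax ht
  have h1 := gl_T_bound ℓ M S p u k hM hS0 hp hb y hy
  have h2 : ‖Complex.sin (k * y) / k‖ ≤ 1 / ‖k‖ * Real.exp (|k.im| * y) := by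
    rw [norm_div, one_div, inv_mul_eq_div]
    gcongr
    exact gl_sin_le k y y (by rw [abs_of_nonneg hy.1])
  have h3 : ‖u y‖ ≤ (1 / ‖k‖ + M * ℓ / ‖k‖ * S) * Real.exp (|k.im| * y) := by
    rw [hs y hy, add_mul]
    exact (norm_add_le _ _).trans (add_le_add h2 h1)
  rw [← div_le_iff₀ (Real.exp_pos _), ← hS] at h3
  have h4 : M * ℓ / ‖k‖ ≤ 1 / 2 := by
    rw [div_le_iff₀ hk0]; linarith
  have h5 : S ≤ 2 / ‖k‖ := by
    have : M * ℓ / ‖k‖ * S ≤ 1 / 2 * S := by gcongr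
    have e : 2 / ‖k‖ = 2 * (1 / ‖k‖) := by ring
    rw [e]; linarith
  intro x hx
  exact (hb x hx).trans (by gcongr)

lemma gl_core (ℓ M η : ℝ) (hℓ : 0 < ℓ) (q q' : ℝ → ℝ) (u : ℝ → ℂ) (k : ℂ) (hk : k ≠ 0)
    (hM : 0 ≤ M) (hη : 0 ≤ η)
    (hkM : 2 * (M * ℓ) ≤ ‖k‖) (hu : Continuous u) (hqc : Continuous q)
    (hq' : IntervalIntegrable q' volume 0 ℓ)
    (hq : ∀ t ∈ Set.Icc 0 ℓ, q t = q 0 + ∫ u in (0:ℝ)..t, q' u)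
    (hp : ∀ t ∈ Set.Icc 0 ℓ, ‖(q t : ℂ)‖ ≤ M)
    (hs : ∀ x ∈ Set.Icc (0 : ℝ) ℓ, u x = Complex.sin (k * x) / k +
        ∫ t in (0 : ℝ)..x, (Complex.sin (k * ((x : ℂ) - t)) / k) * (q t : ℂ) * u t)
    (hR1 : ∀ x ∈ Set.Icc (0 : ℝ) ℓ,
      ‖∫ t in (0:ℝ)..x, Complex.sin (k * ((x - 2 * t : ℝ) : ℂ)) * (q' t : ℂ)‖
        ≤ η * Real.exp (|k.im| * x))
    (hR2 : ∀ x ∈ Set.Icc (0 : ℝ) ℓ,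
      ‖∫ t in (0:ℝ)..x, Complex.sin (k * ((x - 2 * t : ℝ) : ℂ)) *
        ((q t : ℂ) * ∫ v in (0:ℝ)..t, (q v : ℂ))‖
        ≤ η * Real.exp (|k.im| * x)) :
    ∀ x ∈ Set.Icc (0 : ℝ) ℓ,
      ‖u x - Complex.sin (k * x) / k
          + (Complex.cos (k * x) / k ^ 2) * ((1 / 2 : ℂ) * ∫ t in (0 : ℝ)..x, (q t : ℂ))
          - (Complex.sin (k * x) / k ^ 3) *
              ((1 / 4 : ℂ) * ((q x : ℂ) + (q 0 : ℂ))
                - (1 / 8 : ℂ) * (∫ t in (0 : ℝ)..x, (q t : ℂ)) ^ 2)‖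
        ≤ (η / 2 + (M * ℓ) * (2 * M + η + 2 * (M * ℓ) ^ 2) / ‖k‖) *
          Real.exp (|k.im| * x) / ‖k‖ ^ 3 := by
  have hk0 : 0 < ‖k‖ := norm_pos_iff.2 hk
  have hpc : Continuous (fun t => (q t : ℂ)) := by fun_prop
  have hQc := gl_Qc _ hpc
  have hn4 : ‖1 / (4 * k ^ 3)‖ = 1 / (4 * ‖k‖ ^ 3) := by simp
  have hT1 : ∀ x ∈ Set.Icc (0 : ℝ) ℓ, _ := fun x hx =>
    gl_T1 x hx.1 q q' hqc (hq'.mono_set (by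
      rw [Set.uIcc_of_le hx.1, Set.uIcc_of_le hℓ.le]; exact Set.Icc_subset_Icc_right hx.2))
      (fun t ht => hq t ⟨ht.1, ht.2.trans hx.2⟩) k hk
  have hT2 := fun x => gl_T2 x _ hpc k hk
  set Q : ℝ → ℂ := fun t => ∫ u in (0:ℝ)..t, (q u : ℂ) with hQd
  set A1 : ℝ → ℂ := fun t => -(Complex.cos (k * t) / k ^ 2 * ((1 / 2 : ℂ) * Q t)) with hA1
  have hA1c : Continuous A1 := by fun_prop
  set D : ℝ → ℂ := fun t => u t - Complex.sin (k * t) / k - A1 t with hD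
  have hDc : Continuous D := by fun_prop
  have b0 := gl_apriori ℓ M hℓ _ u k hk hM hkM hu hp hs
  have b1 := gl_T_bound ℓ M _ _ u k hM (by positivity) hp b0
  have b1' : ∀ x ∈ Set.Icc 0 ℓ, ‖u x - Complex.sin (k * x) / k‖ ≤
      (M * ℓ / ‖k‖ * (2 / ‖k‖)) * Real.exp (|k.im| * x) := fun x hx => by
    have : u x - Complex.sin (k * x) / k =
      ∫ t in (0 : ℝ)..x, (Complex.sin (k * ((x : ℂ) - t)) / k) * (q t : ℂ) * u t := by
      rw [hs x hx]; ring
    rw [this]; exact b1 x hx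
  have b2 := gl_T_bound ℓ M _ _ (fun x => u x - Complex.sin (k * x) / k) k hM
    (by positivity) hp b1'
  -- decomposition of T u
  have hTu : ∀ x : ℝ, ∫ t in (0 : ℝ)..x, (Complex.sin (k * ((x : ℂ) - t)) / k) * (q t : ℂ) * u t =
      (∫ t in (0 : ℝ)..x, (Complex.sin (k * ((x : ℂ) - t)) / k) * (q t : ℂ) *
        (Complex.sin (k * t) / k)) +
      ∫ t in (0 : ℝ)..x, (Complex.sin (k * ((x : ℂ) - t)) / k) * (q t : ℂ) *
        (u t - Complex.sin (k * t) / k) := fun x => by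
    rw [← intervalIntegral.integral_add (by apply Continuous.intervalIntegrable; fun_prop)
      (by apply Continuous.intervalIntegrable; fun_prop)]
    congr 1; ext t; ring
  have hTD : ∀ x : ℝ, ∫ t in (0 : ℝ)..x, (Complex.sin (k * ((x : ℂ) - t)) / k) * (q t : ℂ) *
        (u t - Complex.sin (k * t) / k) =
      (∫ t in (0 : ℝ)..x, (Complex.sin (k * ((x : ℂ) - t)) / k) * (q t : ℂ) * A1 t) +
      ∫ t in (0 : ℝ)..x, (Complex.sin (k * ((x : ℂ) - t)) / k) * (q t : ℂ) * D t := fun x => by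
    rw [← intervalIntegral.integral_add (by apply Continuous.intervalIntegrable; fun_prop)
      (by apply Continuous.intervalIntegrable; fun_prop)]
    congr 1; ext t; simp only [hD]; ring
  have bD : ∀ x ∈ Set.Icc 0 ℓ, ‖D x‖ ≤
      ((2 * M + η + 2 * (M * ℓ) ^ 2) / ‖k‖ ^ 3) * Real.exp (|k.im| * x) := fun x hx => by
    have e : D x = Complex.sin (k * x) / k ^ 3 * ((1 / 4 : ℂ) * ((q x : ℂ) + q 0)) +
      1 / (4 * k ^ 3) * (∫ t in (0:ℝ)..x, Complex.sin (k * ((x - 2 * t : ℝ) : ℂ)) * (q' t : ℂ)) +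
      ∫ t in (0 : ℝ)..x, (Complex.sin (k * ((x : ℂ) - t)) / k) * (q t : ℂ) *
        (u t - Complex.sin (k * t) / k) := by
      simp only [hD]
      rw [hs x hx, hTu x, hT1 x hx]
      simp only [hA1, hQd]
      ring
    have f1 : ‖Complex.sin (k * x) / k ^ 3 * ((1 / 4 : ℂ) * ((q x : ℂ) + q 0))‖ ≤
        Real.exp (|k.im| * x) / ‖k‖ ^ 3 * (1 / 4 * (M + M)) := by
      rw [norm_mul, norm_mul, norm_div, norm_pow]
      gcongr
      · exact gl_sin_le k x x (by rw [abs_of_nonneg hx.1])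
      · simp
      · exact (norm_add_le _ _).trans (add_le_add (hp x hx) (hp 0 ⟨le_rfl, hℓ.le⟩))
    have f2 : ‖1 / (4 * k ^ 3) *
        (∫ t in (0:ℝ)..x, Complex.sin (k * ((x - 2 * t : ℝ) : ℂ)) * (q' t : ℂ))‖ ≤
        1 / (4 * ‖k‖ ^ 3) * (η * Real.exp (|k.im| * x)) := by
      rw [norm_mul, hn4]
      gcongr
      exact hR1 x hx
    rw [e]
    refine (norm_add_le _ _).trans ((add_le_add ((norm_add_le _ _).trans (add_le_add f1 f2))
      (b2 x hx)).trans ?_)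
    have : 0 ≤ Real.exp (|k.im| * x) / ‖k‖ ^ 3 * (3 / 2 * M + 3 / 4 * η) := by positivity
    refine le_of_sub_nonneg (this.trans_eq ?_)
    field_simp
    ring
  have bTD := gl_T_bound ℓ M _ _ D k hM (by positivity) hp bD
  intro x hx
  have e : u x - Complex.sin (k * x) / k
          + (Complex.cos (k * x) / k ^ 2) * ((1 / 2 : ℂ) * Q x)
          - (Complex.sin (k * x) / k ^ 3) *
              ((1 / 4 : ℂ) * ((q x : ℂ) + (q 0 : ℂ)) - (1 / 8 : ℂ) * (Q x) ^ 2) =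
      1 / (4 * k ^ 3) * (∫ t in (0:ℝ)..x, Complex.sin (k * ((x - 2 * t : ℝ) : ℂ)) * (q' t : ℂ)) -
      1 / (4 * k ^ 3) * (∫ t in (0:ℝ)..x, Complex.sin (k * ((x - 2 * t : ℝ) : ℂ)) *
        ((q t : ℂ) * Q t)) +
      ∫ t in (0 : ℝ)..x, (Complex.sin (k * ((x : ℂ) - t)) / k) * (q t : ℂ) * D t := by
    have := hT2 x
    rw [hs x hx, hTu x, hTD x, hT1 x hx]
    simp only [hA1, hQd] at this ⊢
    rw [this]
    ring
  change ‖u x - Complex.sin (k * x) / k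
          + (Complex.cos (k * x) / k ^ 2) * ((1 / 2 : ℂ) * Q x)
          - (Complex.sin (k * x) / k ^ 3) *
              ((1 / 4 : ℂ) * ((q x : ℂ) + (q 0 : ℂ)) - (1 / 8 : ℂ) * (Q x) ^ 2)‖ ≤ _
  rw [e]
  have f1 : ‖1 / (4 * k ^ 3) *
        (∫ t in (0:ℝ)..x, Complex.sin (k * ((x - 2 * t : ℝ) : ℂ)) * (q' t : ℂ))‖ ≤
        1 / (4 * ‖k‖ ^ 3) * (η * Real.exp (|k.im| * x)) := by
    rw [norm_mul, hn4]
    gcongr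
    exact hR1 x hx
  have f2 : ‖1 / (4 * k ^ 3) *
        (∫ t in (0:ℝ)..x, Complex.sin (k * ((x - 2 * t : ℝ) : ℂ)) * ((q t : ℂ) * Q t))‖ ≤
        1 / (4 * ‖k‖ ^ 3) * (η * Real.exp (|k.im| * x)) := by
    rw [norm_mul, hn4]
    gcongr
    exact hR2 x hx
  refine (norm_add_le _ _).trans ((add_le_add ((norm_sub_le _ _).trans (add_le_add f1 f2))
      (bTD x hx)).trans (le_of_eq ?_))
  field_simp
  ring



/-- Asymptotics of the solution `s(·, k)` of the Volterra integral equation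
`s(x,k) = sin(kx)/k + ∫₀ˣ (sin(k(x−t))/k) q(t) s(t,k) dt` on `[0, ℓ]`, where the potential
`q` is absolutely continuous with derivative `q' ∈ L¹((0,ℓ))`. -/
theorem gelfand_levitan_s_asymptotics
    (ℓ : ℝ) (hℓ : 0 < ℓ) (q q' : ℝ → ℝ)
    (hq' : IntervalIntegrable q' volume 0 ℓ)
    (hq : ∀ x ∈ Set.Icc (0 : ℝ) ℓ, q x = q 0 + ∫ t in (0 : ℝ)..x, q' t)
    (s : ℂ → ℝ → ℂ)
    (hscont : ∀ k : ℂ, k ≠ 0 → ContinuousOn (s k) (Set.Icc 0 ℓ))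
    (hs : ∀ k : ℂ, k ≠ 0 → ∀ x ∈ Set.Icc (0 : ℝ) ℓ,
      s k x = Complex.sin (k * x) / k +
        ∫ t in (0 : ℝ)..x, (Complex.sin (k * ((x : ℂ) - t)) / k) * (q t : ℂ) * s k t) :
    ∀ ε > 0, ∃ K > 0, ∀ k : ℂ, K ≤ ‖k‖ → ∀ x ∈ Set.Icc (0 : ℝ) ℓ,
      ‖s k x - Complex.sin (k * x) / k
          + (Complex.cos (k * x) / k ^ 2) * ((1 / 2 : ℂ) * ∫ t in (0 : ℝ)..x, (q t : ℂ))
          - (Complex.sin (k * x) / k ^ 3) *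
              ((1 / 4 : ℂ) * ((q x : ℂ) + (q 0 : ℂ))
                - (1 / 8 : ℂ) * (∫ t in (0 : ℝ)..x, (q t : ℂ)) ^ 2)‖
        ≤ ε * Real.exp (|k.im| * x) / ‖k‖ ^ 3 := by
  intro ε hε
  have hqc : ContinuousOn q (Set.Icc 0 ℓ) := by
    have h1 := intervalIntegral.continuousOn_primitive_interval' hq' (a := 0) (by simp)
    rw [Set.uIcc_of_le hℓ.le] at h1
    exact (continuousOn_const.add h1).congr hq
  set qe : ℝ → ℝ := Set.IccExtend hℓ.le ((Set.Icc 0 ℓ).domRestrict q) with hqe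
  have hqec : Continuous qe := hqc.domRestrict.Icc_extend'
  have hqeq : ∀ t ∈ Set.Icc 0 ℓ, qe t = q t := fun t ht => by
    rw [hqe, Set.IccExtend_of_mem _ _ ht]; rfl
  have h0 : (0:ℝ) ∈ Set.Icc 0 ℓ := ⟨le_rfl, hℓ.le⟩
  have hpc : Continuous (fun t => (qe t : ℂ)) := by fun_prop
  have hQc := gl_Qc _ hpc
  obtain ⟨M, hM⟩ := (isCompact_Icc (a := (0:ℝ)) (b := ℓ)).exists_bound_of_continuousOn
    hpc.continuousOn
  have hM0 : 0 ≤ M := (norm_nonneg _).trans (hM 0 h0)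
  obtain ⟨K1, hK1, hR1⟩ := gl_RL ℓ hℓ (fun t => (q' t : ℂ)) (gl_ofReal hq') ε hε
  obtain ⟨K2, hK2, hR2⟩ := gl_RL ℓ hℓ (fun t => (qe t : ℂ) * ∫ v in (0:ℝ)..t, (qe v : ℂ))
    ((hpc.mul hQc).intervalIntegrable _ _) ε hε
  set C := (M * ℓ) * (2 * M + ε + 2 * (M * ℓ) ^ 2) with hC
  have hC0 : 0 ≤ C := by positivity
  refine ⟨K1 + K2 + 2 * (M * ℓ) + 2 * C / ε, by positivity, fun k hk x hx => ?_⟩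
  have g1 : 0 ≤ M * ℓ := by positivity
  have g2 : 0 ≤ 2 * C / ε := by positivity
  have hk0 : 0 < ‖k‖ := by linarith
  have hkne : k ≠ 0 := norm_pos_iff.1 hk0
  set u : ℝ → ℂ := Set.IccExtend hℓ.le ((Set.Icc 0 ℓ).domRestrict (s k)) with hu
  have huc : Continuous u := (hscont k hkne).domRestrict.Icc_extend'
  have hueq : ∀ t ∈ Set.Icc 0 ℓ, u t = s k t := fun t ht => by
    rw [hu, Set.IccExtend_of_mem _ _ ht]; rfl
  have key := gl_core ℓ M ε hℓ qe q' u k hkne hM0 hε.le (by linarith) huc hqec hq'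
    (fun t ht => by rw [hqeq t ht, hqeq 0 h0, hq t ht]) hM
    (fun y hy => by
      rw [hueq y hy, hs k hkne y hy]
      congr 1
      apply intervalIntegral.integral_congr
      intro t ht
      rw [Set.uIcc_of_le hy.1] at ht
      have ht' : t ∈ Set.Icc 0 ℓ := ⟨ht.1, ht.2.trans hy.2⟩
      simp only [hueq t ht', hqeq t ht'])
    (hR1 k (by linarith)) (hR2 k (by linarith)) x hx
  have eQ : ∫ t in (0:ℝ)..x, (qe t : ℂ) = ∫ t in (0:ℝ)..x, (q t : ℂ) := by
    apply intervalIntegral.integral_congr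
    intro t ht
    rw [Set.uIcc_of_le hx.1] at ht
    simp only [hqeq t ⟨ht.1, ht.2.trans hx.2⟩]
  rw [hueq x hx, hqeq x hx, hqeq 0 h0, eQ] at key
  refine key.trans ?_
  gcongr
  have : C / ‖k‖ ≤ ε / 2 := by
    rw [div_le_iff₀ hk0]
    have : 2 * C / ε ≤ ‖k‖ := by linarith
    rw [div_le_iff₀ hε] at this
    linarith
  linarith
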